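/- Preservation: If Γ ⊢ S ⇒ Γ', the store σ is well-typed for Γ (σ ⊨ Γ), and ⟨S, σ⟩ ↝ ⟨S', σ'⟩, then there exists a context Γ₁ such that Γ₁ ⊢ S' ⇒ Γ' and σ' ⊨ Γ₁. -/

import Mathlib

inductive Ty : Type
  | int
  | bool
deriving DecidableEq

inductive Expr : Type
  | int (n : ℤ)
  | tt
  | ff
  | var (x : String)
  | plus (e₁ e₂ : Expr)
  | isOp (e₁ e₂ : Expr)

inductive Val : Type
  | int (n : ℤ)
  | bool (b : Bool)

/-- A value has a type: integer values have type `Int`, booleans have type `Bool`. -/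
inductive ValHasTy : Val → Ty → Prop
  | int (n : ℤ) : ValHasTy (.int n) .int
  | bool (b : Bool) : ValHasTy (.bool b) .bool

/-- Typing contexts: finite maps from variables to types. -/
def Ctx : Type := String → Option Ty

/-- Stores: partial maps from variables to values. -/
def Store : Type := String → Option Val

/-- Expression typing `Γ ⊢ e : τ`. -/
inductive HasTy : Ctx → Expr → Ty → Prop
  | int (Γ : Ctx) (n : ℤ) : HasTy Γ (.int n) .int
  | tt (Γ : Ctx) : HasTy Γ .tt .bool
  | ff (Γ : Ctx) : HasTy Γ .ff .bool
  | var (Γ : Ctx) (x : String) (τ : Ty) : Γ x = some τ → HasTy Γ (.var x) τ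
  | plus (Γ : Ctx) (e₁ e₂ : Expr) :
      HasTy Γ e₁ .int → HasTy Γ e₂ .int → HasTy Γ (.plus e₁ e₂) .int
  | rel (Γ : Ctx) (e₁ e₂ : Expr) (τ : Ty) :
      HasTy Γ e₁ τ → HasTy Γ e₂ τ → HasTy Γ (.isOp e₁ e₂) .bool

inductive Stmt : Type
  | skip
  | letBe (x : String) (e : Expr)
  | ifThenElse (e : Expr) (s₁ s₂ : Stmt)
  | print (e : Expr)
  | seq (s₁ s₂ : Stmt)

/-- Statement typing `Γ ⊢ S ⇒ Γ'`. -/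
inductive StmtTy : Ctx → Stmt → Ctx → Prop
  | skip (Γ : Ctx) : StmtTy Γ .skip Γ
  | letBe (Γ : Ctx) (x : String) (e : Expr) (τ : Ty) :
      HasTy Γ e τ → StmtTy Γ (.letBe x e) (fun y => if y = x then some τ else Γ y)
  | ifThenElse (Γ : Ctx) (e : Expr) (s₁ s₂ : Stmt) :
      HasTy Γ e .bool → StmtTy Γ s₁ Γ → StmtTy Γ s₂ Γ →
      StmtTy Γ (.ifThenElse e s₁ s₂) Γ
  | print (Γ : Ctx) (e : Expr) (τ : Ty) : HasTy Γ e τ → StmtTy Γ (.print e) Γ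
  | seq (Γ Γ' Γ'' : Ctx) (s₁ s₂ : Stmt) :
      StmtTy Γ s₁ Γ' → StmtTy Γ' s₂ Γ'' → StmtTy Γ (.seq s₁ s₂) Γ''

/-- Big-step expression evaluation `σ ⊢ e ⇓ v`. -/
inductive Eval : Store → Expr → Val → Prop
  | int (σ : Store) (n : ℤ) : Eval σ (.int n) (.int n)
  | tt (σ : Store) : Eval σ .tt (.bool true)
  | ff (σ : Store) : Eval σ .ff (.bool false)
  | var (σ : Store) (x : String) (v : Val) : σ x = some v → Eval σ (.var x) v
  | plus (σ : Store) (e₁ e₂ : Expr) (n₁ n₂ : ℤ) :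
      Eval σ e₁ (.int n₁) → Eval σ e₂ (.int n₂) →
      Eval σ (.plus e₁ e₂) (.int (n₁ + n₂))
  | isInt (σ : Store) (e₁ e₂ : Expr) (n₁ n₂ : ℤ) :
      Eval σ e₁ (.int n₁) → Eval σ e₂ (.int n₂) →
      Eval σ (.isOp e₁ e₂) (.bool (n₁ == n₂))
  | isBool (σ : Store) (e₁ e₂ : Expr) (b₁ b₂ : Bool) :
      Eval σ e₁ (.bool b₁) → Eval σ e₂ (.bool b₂) →
      Eval σ (.isOp e₁ e₂) (.bool (b₁ == b₂))

/-- Small-step statement semantics `⟨S, σ⟩ ↝ ⟨S', σ'⟩`. -/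
inductive Step : Stmt → Store → Stmt → Store → Prop
  | letBe (σ : Store) (x : String) (e : Expr) (v : Val) :
      Eval σ e v → Step (.letBe x e) σ .skip (fun y => if y = x then some v else σ y)
  | ifTrue (σ : Store) (e : Expr) (s₁ s₂ : Stmt) :
      Eval σ e (.bool true) → Step (.ifThenElse e s₁ s₂) σ s₁ σ
  | ifFalse (σ : Store) (e : Expr) (s₁ s₂ : Stmt) :
      Eval σ e (.bool false) → Step (.ifThenElse e s₁ s₂) σ s₂ σ
  | print (σ : Store) (e : Expr) (v : Val) : Eval σ e v → Step (.print e) σ .skip σ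
  | seqSkip (σ : Store) (s₂ : Stmt) : Step (.seq .skip s₂) σ s₂ σ
  | seqStep (σ σ' : Store) (s₁ s₁' s₂ : Stmt) :
      Step s₁ σ s₁' σ' → Step (.seq s₁ s₂) σ (.seq s₁' s₂) σ'

/-- `σ ⊨ Γ`: the store is well-typed for the context. -/
def StoreTy (σ : Store) (Γ : Ctx) : Prop :=
  ∀ x τ, Γ x = some τ → ∃ v, σ x = some v ∧ ValHasTy v τ

/-- The empty typing context. -/
def emptyCtx : Ctx := fun _ => none

/-- Expression type soundness: evaluation yields a value of the same type. -/
theorem eval_hasTy {Γ : Ctx} {σ : Store} (hσ : StoreTy σ Γ) {e : Expr} {v : Val}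
    (hev : Eval σ e v) : ∀ {τ : Ty}, HasTy Γ e τ → ValHasTy v τ := by
  intro τ ht
  cases hev with
  | int => cases ht; constructor
  | tt => cases ht; constructor
  | ff => cases ht; constructor
  | var x v hx =>
    cases ht with
    | var _ _ hΓ =>
      obtain ⟨w, hw, hwt⟩ := hσ _ _ hΓ
      rw [hx] at hw
      cases hw
      exact hwt
  | plus => cases ht; constructor
  | isInt => cases ht; constructor
  | isBool => cases ht; constructor

/-- **Preservation**: typing of statements is preserved by small steps, with a
store that remains well-typed for a suitable intermediate context. -/
theorem preservation (Γ Γ' : Ctx) (S : Stmt) (σ : Store) (S' : Stmt) (σ' : Store)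
    (hty : StmtTy Γ S Γ') (hσ : StoreTy σ Γ) (hstep : Step S σ S' σ') :
    ∃ Γ₁ : Ctx, StmtTy Γ₁ S' Γ' ∧ StoreTy σ' Γ₁ := by
  induction hstep generalizing Γ Γ' with
  | letBe σ x e v hev =>
    cases hty with
    | letBe _ _ _ τ he =>
      refine ⟨_, StmtTy.skip _, ?_⟩
      intro y τ' hy
      by_cases hyx : y = x
      · simp only [hyx, if_true] at hy ⊢
        cases hy
        exact ⟨v, rfl, eval_hasTy hσ hev he⟩
      · simp only [hyx, if_false] at hy ⊢
        exact hσ y τ' hy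
  | ifTrue σ e s₁ s₂ hev =>
    cases hty with
    | ifThenElse _ _ _ _ he h₁ h₂ => exact ⟨_, h₁, hσ⟩
  | ifFalse σ e s₁ s₂ hev =>
    cases hty with
    | ifThenElse _ _ _ _ he h₁ h₂ => exact ⟨_, h₂, hσ⟩
  | print σ e v hev =>
    cases hty with
    | print => exact ⟨_, StmtTy.skip _, hσ⟩
  | seqSkip σ s₂ =>
    cases hty with
    | seq _ _ _ _ _ h₁ h₂ =>
      cases h₁
      exact ⟨_, h₂, hσ⟩
  | seqStep σ σ' s₁ s₁' s₂ hs ih =>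
    cases hty with
    | seq _ _ _ _ _ h₁ h₂ =>
      obtain ⟨Γ₁, ht, hs'⟩ := ih _ _ h₁ hσ
      exact ⟨Γ₁, StmtTy.seq _ _ _ _ _ ht h₂, hs'⟩
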